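/- arXiv:2003.07648 — 4 statements merged into one kernel-verified Lean document; each statement's English description precedes it below -/
import Mathlib

section
/- The φ-divergence risk measure is positively homogeneous: for every integrable random variable X and every λ > 0, ρ_{φ,β}(λ·X) = λ·ρ_{φ,β}(X). -/
/-!
Substitute `t = λ s` in the infimum: since `λ X / (λ s) = X / s`, the objective only picks up the
factor `λ`, which leaves the infimum because multiplication by a positive finite extended real is
an upper adjoint (of division by it).
-/

open MeasureTheory
open scoped ENNReal

noncomputable section

/-- A divergence function: convex, lower semicontinuous `φ : ℝ → ℝ ∪ {∞}` with `φ 1 = 0`,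
effective domain `[0, ∞)` and superlinear growth `φ x / x → ∞` as `x → ∞`. -/
structure IsDivergenceFunction (φ : ℝ → EReal) : Prop where
  convex : ∀ x y a b : ℝ, 0 < a → 0 < b → a + b = 1 →
    φ (a * x + b * y) ≤ (a : EReal) * φ x + (b : EReal) * φ y
  lsc : LowerSemicontinuous φ
  ne_bot : ∀ x : ℝ, φ x ≠ ⊥
  one : φ 1 = 0
  domain : ∀ x : ℝ, φ x ≠ ⊤ ↔ 0 ≤ x
  superlinear : ∀ M : ℝ, ∃ N : ℝ, ∀ x : ℝ, N ≤ x → ((M * x : ℝ) : EReal) ≤ φ x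

/-- The convex conjugate `ψ(y) = sup_z (y·z − φ(z))`, as an extended real number. -/
def psiE (φ : ℝ → EReal) (y : ℝ) : EReal := ⨆ z : ℝ, (((y * z : ℝ) : EReal) - φ z)

/-- The convex conjugate, as a real number (it is finite for divergence functions). -/
def psiR (φ : ℝ → EReal) (y : ℝ) : ℝ := (psiE φ y).toReal

open Classical in
/-- The objective `t (β + μ + E ψ(X/t − μ))` of the φ-divergence risk measure;
the value is `⊤` when `ψ(X/t − μ)` fails to be integrable. -/
def rhoObj {Ω : Type*} [MeasurableSpace Ω] (φ : ℝ → EReal) (β : ℝ) (P : Measure Ω)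
    (X : Ω → ℝ) (μ t : ℝ) : EReal :=
  if Integrable (fun ω => psiR φ (X ω / t - μ)) P then
    (((t * (β + μ + ∫ ω, psiR φ (X ω / t - μ) ∂P)) : ℝ) : EReal)
  else ⊤

/-- The φ-divergence risk measure `ρ_{φ,β}(X) = inf_{μ ∈ ℝ, t > 0} t (β + μ + E ψ(X/t − μ))`. -/
def rhoDiv {Ω : Type*} [MeasurableSpace Ω] (φ : ℝ → EReal) (β : ℝ) (P : Measure Ω)
    (X : Ω → ℝ) : EReal :=
  ⨅ (μ : ℝ) (t : ℝ) (_ : 0 < t), rhoObj φ β P X μ t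

variable {Ω : Type*} [MeasurableSpace Ω]

theorem iInf_pos_eq_iInf_pos_mul {G₀ α : Type*} [GroupWithZero G₀] [Preorder G₀]
    [PosMulStrictMono G₀] [PosMulReflectLT G₀] [InfSet α] {c : G₀} (hc : 0 < c) (f : G₀ → α) :
    ⨅ (t : G₀) (_ : 0 < t), f t = ⨅ (t : G₀) (_ : 0 < t), f (c * t) :=
  ((Equiv.mulLeft₀ c hc.ne').iInf_congr fun t => by
    simp only [Equiv.mulLeft₀_apply, mul_pos_iff_of_pos_left hc]).symm

theorem ereal_mul_iInf_of_pos_of_ne_top {ι : Sort*} {a : EReal} (ha : 0 < a) (ha' : a ≠ ⊤)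
    (f : ι → EReal) : a * ⨅ i, f i = ⨅ i, a * f i :=
  have hgc : GaloisConnection (· / a) (a * ·) := fun _ _ => EReal.div_le_iff_le_mul ha ha'
  hgc.u_iInf

theorem rhoObj_const_mul (P : Measure Ω) (φ : ℝ → EReal) (β : ℝ) (X : Ω → ℝ) {c : ℝ}
    (hc : 0 < c) (μ t : ℝ) :
    rhoObj φ β P (fun ω => c * X ω) μ (c * t) = (c : EReal) * rhoObj φ β P X μ t := by
  have integrand_eq : (fun ω => psiR φ (c * X ω / (c * t) - μ)) =
      fun ω => psiR φ (X ω / t - μ) := by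
    simp only [mul_div_mul_left _ _ hc.ne']
  rw [rhoObj, rhoObj, integrand_eq]
  split_ifs
  · rw [mul_assoc, EReal.coe_mul]
  · exact (EReal.coe_mul_top_of_pos hc).symm

theorem rhoDiv_posHomogeneous_general (P : Measure Ω)
    (φ : ℝ → EReal) (_hφ : IsDivergenceFunction φ) (β : ℝ)
    (X : Ω → ℝ) (_hX : AEMeasurable X P) (lam : ℝ) (hlam : 0 < lam) :
    rhoDiv φ β P (fun ω => lam * X ω) = (lam : EReal) * rhoDiv φ β P X :=
  calc rhoDiv φ β P (fun ω => lam * X ω)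
      = ⨅ (μ : ℝ) (t : ℝ) (_ : 0 < t), rhoObj φ β P (fun ω => lam * X ω) μ (lam * t) :=
        iInf_congr fun _ => iInf_pos_eq_iInf_pos_mul hlam _
    _ = ⨅ (μ : ℝ) (t : ℝ) (_ : 0 < t), (lam : EReal) * rhoObj φ β P X μ t := by
        simp only [rhoObj_const_mul P φ β X hlam]
    _ = (lam : EReal) * rhoDiv φ β P X := by
        simp only [rhoDiv,
          ereal_mul_iInf_of_pos_of_ne_top (EReal.coe_pos.2 hlam) (EReal.coe_ne_top lam)]

/-- Positive homogeneity: `ρ_{φ,β}(λ·X) = λ·ρ_{φ,β}(X)` for `λ > 0`. -/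
theorem rhoDiv_posHomogeneous (P : Measure Ω) [IsProbabilityMeasure P]
    (φ : ℝ → EReal) (hφ : IsDivergenceFunction φ) (β : ℝ) (hβ : 0 < β)
    (X : Ω → ℝ) (hX : Integrable X P) (lam : ℝ) (hlam : 0 < lam) :
    rhoDiv φ β P (fun ω => lam * X ω) = (lam : EReal) * rhoDiv φ β P X :=
  rhoDiv_posHomogeneous_general P φ hφ β X hX.aemeasurable lam hlam
end
end

section
/- The φ-divergence risk measure is subadditive: for all integrable random variables X and Y, ρ_{φ,β}(X + Y) ≤ ρ_{φ,β}(X) + ρ_{φ,β}(Y). -/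
open MeasureTheory
open scoped ENNReal

noncomputable section

variable {Ω : Type*} [MeasurableSpace Ω]

/-!
For a convex `f`, the perspective `(x, s) ↦ s * f (x / s)` is subadditive. With `m = t * μ`, the
objective `t * (β + μ + E ψ(X / t - μ))` equals `β * t + m + E [t * ψ((X - m) / t)]`, so it is
jointly subadditive in `(X, m, t)`, and subadditivity survives taking the infimum over `(m, t)`. The
only obstruction is the convention `⊥ + ⊤ = ⊥`; it does not arise because `φ 1 ≤ 0` gives `y ≤ ψ y`,
so that, with `0 ≤ β`, the risk of `X` is at least its expectation.
-/

section Perspective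

variable {f : ℝ → ℝ} {s t : ℝ}

theorem perspective_add_le (hf : ConvexOn ℝ Set.univ f) (hs : 0 < s) (ht : 0 < t) (x y : ℝ) :
    (s + t) * f ((x + y) / (s + t)) ≤ s * f (x / s) + t * f (y / t) := by
  have hst : 0 < s + t := add_pos hs ht
  have hmean : (x + y) / (s + t) = s / (s + t) * (x / s) + t / (s + t) * (y / t) := by
    field_simp
  calc (s + t) * f ((x + y) / (s + t))
      ≤ (s + t) * (s / (s + t) * f (x / s) + t / (s + t) * f (y / t)) := by
        rw [hmean]
        exact mul_le_mul_of_nonneg_left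
          ((convexOn_iff_div.1 hf).2 trivial trivial hs.le ht.le hst) hst.le
    _ = s * f (x / s) + t * f (y / t) := by field_simp

variable {P : Measure Ω} [IsFiniteMeasure P] {U V : Ω → ℝ}

theorem integrable_perspective_add (hf : ConvexOn ℝ Set.univ f) (hs : 0 < s) (ht : 0 < t)
    (hU : Integrable U P) (hV : Integrable V P)
    (hfU : Integrable (fun ω => f (U ω / s)) P) (hfV : Integrable (fun ω => f (V ω / t)) P) :
    Integrable (fun ω => f ((U ω + V ω) / (s + t))) P := by
  have hst : 0 < s + t := add_pos hs ht
  have hcont : Continuous f := continuousOn_univ.1 (hf.continuousOn isOpen_univ)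
  have hUV : Integrable (fun ω => (U ω + V ω) / (s + t)) P := (hU.add hV).div_const _
  obtain ⟨a, b, hab⟩ := hf.exists_affine_le_real isClosed_univ
    hcont.continuousOn.lowerSemicontinuousOn
  have hupper (ω : Ω) :
      f ((U ω + V ω) / (s + t)) ≤ (s * f (U ω / s) + t * f (V ω / t)) / (s + t) :=
    (le_div_iff₀' hst).2 (perspective_add_le hf hs ht _ _)
  exact integrable_of_le_of_le (hcont.comp_aestronglyMeasurable hUV.aestronglyMeasurable)
    (ae_of_all _ fun ω => hab _ trivial) (ae_of_all _ hupper)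
    ((hUV.const_mul a).add (integrable_const b))
    (((hfU.const_mul s).add (hfV.const_mul t)).div_const _)

theorem integral_perspective_add_le (hf : ConvexOn ℝ Set.univ f) (hs : 0 < s) (ht : 0 < t)
    (hU : Integrable U P) (hV : Integrable V P)
    (hfU : Integrable (fun ω => f (U ω / s)) P) (hfV : Integrable (fun ω => f (V ω / t)) P) :
    (s + t) * ∫ ω, f ((U ω + V ω) / (s + t)) ∂P ≤
      s * ∫ ω, f (U ω / s) ∂P + t * ∫ ω, f (V ω / t) ∂P := by
  have hfUV := integrable_perspective_add hf hs ht hU hV hfU hfV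
  simp only [← integral_const_mul]
  rw [← integral_add (hfU.const_mul s) (hfV.const_mul t)]
  exact integral_mono (hfUV.const_mul _) ((hfU.const_mul s).add (hfV.const_mul t))
    fun ω => perspective_add_le hf hs ht _ _

end Perspective

section Conjugate

variable {φ : ℝ → EReal}

theorem mul_sub_le_psiE (y z : ℝ) : ((y * z : ℝ) : EReal) - φ z ≤ psiE φ y :=
  le_iSup (fun z : ℝ => ((y * z : ℝ) : EReal) - φ z) z

theorem psiE_ne_bot {z : ℝ} (hz : φ z ≠ ⊤) (y : ℝ) : psiE φ y ≠ ⊥ := by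
  refine ne_bot_of_le_ne_bot ?_ (mul_sub_le_psiE y z)
  simp [sub_eq_add_neg, EReal.add_eq_bot_iff, hz, -EReal.coe_mul]

theorem coe_psiR {y z : ℝ} (hz : φ z ≠ ⊤) (hψ : psiE φ y ≠ ⊤) : (psiR φ y : EReal) = psiE φ y :=
  EReal.coe_toReal hψ (psiE_ne_bot hz y)

theorem self_le_psiR {y : ℝ} (hφ : φ 1 ≤ 0) (hψ : psiE φ y ≠ ⊤) : y ≤ psiR φ y := by
  rw [← EReal.coe_le_coe_iff, coe_psiR (ne_top_of_le_ne_top EReal.zero_ne_top hφ) hψ]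
  calc (y : EReal) = ((y * 1 : ℝ) : EReal) - 0 := by simp
    _ ≤ ((y * 1 : ℝ) : EReal) - φ 1 := EReal.sub_le_sub le_rfl hφ
    _ ≤ psiE φ y := mul_sub_le_psiE y 1

theorem convexOn_psiR {z : ℝ} (hz : φ z ≠ ⊤) (hψ : ∀ y, psiE φ y ≠ ⊤) :
    ConvexOn ℝ Set.univ (psiR φ) := by
  refine ⟨convex_univ, fun x _ y _ a b ha hb hab => ?_⟩
  rw [← EReal.coe_le_coe_iff, coe_psiR hz (hψ _)]
  refine iSup_le fun w => ?_
  have hx : ((x * w : ℝ) : EReal) - φ w ≤ psiR φ x :=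
    (mul_sub_le_psiE x w).trans_eq (coe_psiR hz (hψ x)).symm
  have hy : ((y * w : ℝ) : EReal) - φ w ≤ psiR φ y :=
    (mul_sub_le_psiE y w).trans_eq (coe_psiR hz (hψ y)).symm
  generalize φ w = c at hx hy ⊢
  induction c with
  | bot => simp [-EReal.coe_mul] at hx
  | top => simp
  | coe c =>
    norm_cast at hx hy ⊢
    calc (a • x + b • y) * w - c = a * (x * w - c) + b * (y * w - c) := by
          simp only [smul_eq_mul]
          linear_combination c * hab
      _ ≤ a • psiR φ x + b • psiR φ y := by
          simp only [smul_eq_mul]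
          gcongr

theorem exists_coe_le_of_isCompact {α : Type*} [TopologicalSpace α] {g : α → EReal} {K : Set α}
    (hK : IsCompact K) (hg : LowerSemicontinuousOn g K) (hbot : ∀ x ∈ K, g x ≠ ⊥) :
    ∃ c : ℝ, ∀ x ∈ K, (c : EReal) ≤ g x := by
  obtain rfl | hne := K.eq_empty_or_nonempty
  · simp
  · obtain ⟨a, ha, hmin⟩ := hg.exists_isMinOn hne hK
    obtain ⟨c, hc⟩ := EReal.lt_iff_exists_real_btwn.1 (bot_lt_iff_ne_bot.2 (hbot a ha))
    exact ⟨c, fun x hx => hc.2.le.trans (hmin hx)⟩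

theorem IsDivergenceFunction.psiE_ne_top (hφ : IsDivergenceFunction φ) (y : ℝ) :
    psiE φ y ≠ ⊤ := by
  obtain ⟨N, hN⟩ := hφ.superlinear y
  obtain ⟨c, hc⟩ := exists_coe_le_of_isCompact isCompact_Icc (hφ.lsc.lowerSemicontinuousOn _)
    fun z (_ : z ∈ Set.Icc 0 N) => hφ.ne_bot z
  refine ne_top_of_le_ne_top (EReal.coe_ne_top (max 0 (|y| * N - c))) (iSup_le fun z => ?_)
  rcases lt_or_ge z 0 with hneg | hnonneg
  · have htop : φ z = ⊤ := not_ne_iff.1 (mt (hφ.domain z).1 hneg.not_ge)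
    simp [htop]
  rcases le_or_gt N z with hlarge | hsmall
  · exact (EReal.sub_nonpos.2 (hN z hlarge)).trans (mod_cast le_max_left _ _)
  · have hmul : y * z ≤ |y| * N := by
      gcongr
      exact le_abs_self y
    calc ((y * z : ℝ) : EReal) - φ z ≤ ((|y| * N : ℝ) : EReal) - c :=
          EReal.sub_le_sub (mod_cast hmul) (hc z ⟨hnonneg, hsmall.le⟩)
      _ ≤ ((max 0 (|y| * N - c) : ℝ) : EReal) := mod_cast le_max_right _ _

end Conjugate

section Risk

variable {φ : ℝ → EReal} {β : ℝ} {P : Measure Ω} {X Y : Ω → ℝ} {μ ν s t : ℝ}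

theorem rhoObj_of_integrable (h : Integrable (fun ω => psiR φ (X ω / t - μ)) P) :
    rhoObj φ β P X μ t = ((t * (β + μ + ∫ ω, psiR φ (X ω / t - μ) ∂P) : ℝ) : EReal) :=
  if_pos h

theorem rhoObj_of_not_integrable (h : ¬Integrable (fun ω => psiR φ (X ω / t - μ)) P) :
    rhoObj φ β P X μ t = ⊤ :=
  if_neg h

theorem rhoObj_ne_bot : rhoObj φ β P X μ t ≠ ⊥ := by
  unfold rhoObj
  split_ifs
  exacts [EReal.coe_ne_bot _, top_ne_bot]

theorem rhoDiv_le_rhoObj (ht : 0 < t) : rhoDiv φ β P X ≤ rhoObj φ β P X μ t :=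
  iInf_le_of_le μ (iInf_le_of_le t (iInf_le _ ht))

theorem rhoDiv_lt_iff {c : EReal} :
    rhoDiv φ β P X < c ↔ ∃ μ t : ℝ, 0 < t ∧ rhoObj φ β P X μ t < c := by
  simp only [rhoDiv, iInf_lt_iff, exists_prop]

theorem rhoObj_add_le [IsFiniteMeasure P] (hψ : ConvexOn ℝ Set.univ (psiR φ))
    (hX : Integrable X P) (hY : Integrable Y P) (hs : 0 < s) (ht : 0 < t) :
    rhoObj φ β P (fun ω => X ω + Y ω) ((s * μ + t * ν) / (s + t)) (s + t) ≤
      rhoObj φ β P X μ s + rhoObj φ β P Y ν t := by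
  by_cases hψX : Integrable (fun ω => psiR φ (X ω / s - μ)) P
  swap
  · simp [rhoObj_of_not_integrable hψX, EReal.top_add_of_ne_bot rhoObj_ne_bot]
  by_cases hψY : Integrable (fun ω => psiR φ (Y ω / t - ν)) P
  swap
  · simp [rhoObj_of_not_integrable hψY, EReal.add_top_of_ne_bot rhoObj_ne_bot]
  have hst : s + t ≠ 0 := (add_pos hs ht).ne'
  have hXs (ω : Ω) : X ω / s - μ = (X ω - s * μ) / s := by field_simp
  have hYt (ω : Ω) : Y ω / t - ν = (Y ω - t * ν) / t := by field_simp
  have hsum (ω : Ω) : (X ω + Y ω) / (s + t) - (s * μ + t * ν) / (s + t) =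
      ((X ω - s * μ) + (Y ω - t * ν)) / (s + t) := by ring
  have hXμ : Integrable (fun ω => X ω - s * μ) P := hX.sub (integrable_const _)
  have hYν : Integrable (fun ω => Y ω - t * ν) P := hY.sub (integrable_const _)
  have hψX' : Integrable (fun ω => psiR φ ((X ω - s * μ) / s)) P := by simpa only [hXs] using hψX
  have hψY' : Integrable (fun ω => psiR φ ((Y ω - t * ν) / t)) P := by simpa only [hYt] using hψY
  have hψXY := integrable_perspective_add hψ hs ht hXμ hYν hψX' hψY'
  have hle := integral_perspective_add_le hψ hs ht hXμ hYν hψX' hψY'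
  simp only [← hsum, ← hXs, ← hYt] at hψXY hle
  rw [rhoObj_of_integrable hψXY, rhoObj_of_integrable hψX, rhoObj_of_integrable hψY,
    ← EReal.coe_add, EReal.coe_le_coe_iff]
  have hcancel : (s + t) * ((s * μ + t * ν) / (s + t)) = s * μ + t * ν := mul_div_cancel₀ _ hst
  linarith

theorem integral_le_rhoObj [IsProbabilityMeasure P] (hφ : φ 1 ≤ 0) (hψ : ∀ y, psiE φ y ≠ ⊤)
    (hβ : 0 ≤ β) (hX : Integrable X P) (ht : 0 < t) :
    ((∫ ω, X ω ∂P : ℝ) : EReal) ≤ rhoObj φ β P X μ t := by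
  by_cases hψX : Integrable (fun ω => psiR φ (X ω / t - μ)) P
  swap
  · simp [rhoObj_of_not_integrable hψX]
  rw [rhoObj_of_integrable hψX, EReal.coe_le_coe_iff, ← div_le_iff₀' ht]
  have hmean : (∫ ω, X ω ∂P) / t - μ ≤ ∫ ω, psiR φ (X ω / t - μ) ∂P :=
    calc (∫ ω, X ω ∂P) / t - μ = ∫ ω, (X ω / t - μ) ∂P := by
          rw [integral_sub (hX.div_const t) (integrable_const μ), integral_div]
          simp
      _ ≤ ∫ ω, psiR φ (X ω / t - μ) ∂P :=
          integral_mono ((hX.div_const t).sub (integrable_const μ)) hψX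
            fun ω => self_le_psiR hφ (hψ _)
  linarith

theorem rhoDiv_ne_bot [IsProbabilityMeasure P] (hφ : φ 1 ≤ 0) (hψ : ∀ y, psiE φ y ≠ ⊤)
    (hβ : 0 ≤ β) (hX : Integrable X P) : rhoDiv φ β P X ≠ ⊥ :=
  ne_bot_of_le_ne_bot (EReal.coe_ne_bot (∫ ω, X ω ∂P)) <|
    le_iInf fun _ => le_iInf fun _ => le_iInf fun ht => integral_le_rhoObj hφ hψ hβ hX ht

theorem rhoDiv_subadditive_general [IsProbabilityMeasure P] (hφ : φ 1 ≤ 0)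
    (hψ : ∀ y, psiE φ y ≠ ⊤) (hβ : 0 ≤ β) (hX : Integrable X P) (hY : Integrable Y P) :
    rhoDiv φ β P (fun ω => X ω + Y ω) ≤ rhoDiv φ β P X + rhoDiv φ β P Y := by
  have hconv : ConvexOn ℝ Set.univ (psiR φ) :=
    convexOn_psiR (ne_top_of_le_ne_top EReal.zero_ne_top hφ) hψ
  refine EReal.le_add_of_forall_gt (Or.inl (rhoDiv_ne_bot hφ hψ hβ hX))
    (Or.inr (rhoDiv_ne_bot hφ hψ hβ hY)) fun a ha b hb => ?_
  obtain ⟨μ, s, hs, hμs⟩ := rhoDiv_lt_iff.1 ha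
  obtain ⟨ν, t, ht, hνt⟩ := rhoDiv_lt_iff.1 hb
  calc rhoDiv φ β P (fun ω => X ω + Y ω)
      ≤ rhoObj φ β P (fun ω => X ω + Y ω) ((s * μ + t * ν) / (s + t)) (s + t) :=
        rhoDiv_le_rhoObj (add_pos hs ht)
    _ ≤ rhoObj φ β P X μ s + rhoObj φ β P Y ν t := rhoObj_add_le hconv hX hY hs ht
    _ ≤ a + b := add_le_add hμs.le hνt.le

end Risk

/-- Subadditivity: `ρ_{φ,β}(X + Y) ≤ ρ_{φ,β}(X) + ρ_{φ,β}(Y)`. -/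
theorem rhoDiv_subadditive (P : Measure Ω) [IsProbabilityMeasure P]
    (φ : ℝ → EReal) (hφ : IsDivergenceFunction φ) (β : ℝ) (hβ : 0 < β)
    (X Y : Ω → ℝ) (hX : Integrable X P) (hY : Integrable Y P) :
    rhoDiv φ β P (fun ω => X ω + Y ω) ≤ rhoDiv φ β P X + rhoDiv φ β P Y := by
  exact rhoDiv_subadditive_general hφ.one.le hφ.psiE_ne_top hβ.le hX hY
end
end

section
/- For every integrable random variable X, the φ-divergence risk measure satisfies the bounds E[X] ≤ ρ_{φ,β}(X) ≤ esssup(X), where esssup(X) denotes the essential supremum of X (the upper bound being trivially true when esssup(X) = ∞). In particular, ρ_{φ,β}(0) = 0. -/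
/-!
Since `φ 1 = 0`, the conjugate satisfies `ψ y ≥ y`, and integrating `ψ (X / t - μ) ≥ X / t - μ`
gives the lower bound. Conversely, a subgradient `y` of `φ` at the interior point `1` of its domain
satisfies `ψ y = y`. If `X ≤ c`, the choice `μ = c / t - y` makes the argument of `ψ` at most `y`,
so the objective is at most `c + t * β`, and `t → 0` gives `ρ(X) ≤ c`.
-/

open MeasureTheory
open scoped ENNReal

noncomputable section

variable {Ω : Type*} [MeasurableSpace Ω]

lemma add_rightDeriv_mul_sub_le {S : Set ℝ} {f : ℝ → ℝ} {x z : ℝ} (hf : ConvexOn ℝ S f)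
    (hx : x ∈ interior S) (hz : z ∈ S) :
    f x + derivWithin f (Set.Ioi x) x * (z - x) ≤ f z := by
  rcases lt_trichotomy z x with hzx | rfl | hxz
  · have hslope : slope f z x ≤ derivWithin f (Set.Ioi x) x :=
      (hf.slope_le_leftDeriv_of_mem_interior hz hx hzx).trans
        (hf.leftDeriv_le_rightDeriv_of_mem_interior hx)
    rw [slope_def_field, div_le_iff₀ (sub_pos.2 hzx)] at hslope
    linarith
  · simp
  · have hslope : derivWithin f (Set.Ioi x) x ≤ slope f x z :=
      hf.rightDeriv_le_slope_of_mem_interior hx hz hxz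
    rw [slope_def_field, le_div_iff₀ (sub_pos.2 hxz)] at hslope
    linarith

lemma psiE_le_coe_iff {φ : ℝ → EReal} {y c : ℝ} :
    psiE φ y ≤ c ↔ ∀ z : ℝ, ((y * z - c : ℝ) : EReal) ≤ φ z := by
  refine iSup_le_iff.trans (forall_congr' fun z => ?_)
  rw [EReal.sub_le_iff_le_add (.inr (EReal.coe_ne_top c)) (.inr (EReal.coe_ne_bot c)), add_comm,
    EReal.coe_sub,
    EReal.sub_le_iff_le_add (.inl (EReal.coe_ne_bot c)) (.inl (EReal.coe_ne_top c)), add_comm]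

namespace IsDivergenceFunction

variable {φ : ℝ → EReal} (hφ : IsDivergenceFunction φ)
include hφ

lemma eq_top_of_neg {z : ℝ} (hz : z < 0) : φ z = ⊤ :=
  not_not.1 (mt (hφ.domain z).1 hz.not_ge)

lemma coe_toReal {z : ℝ} (hz : 0 ≤ z) : ((φ z).toReal : EReal) = φ z :=
  EReal.coe_toReal ((hφ.domain z).2 hz) (hφ.ne_bot z)

lemma convexOn_toReal : ConvexOn ℝ (Set.Ici 0) fun z => (φ z).toReal := by
  refine convexOn_iff_forall_pos.2 ⟨convex_Ici 0, fun x hx y hy a b ha hb hab => ?_⟩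
  have hconv := hφ.convex x y a b ha hb hab
  have hxy : 0 ≤ a * x + b * y := add_nonneg (mul_nonneg ha.le hx) (mul_nonneg hb.le hy)
  rw [← hφ.coe_toReal hxy, ← hφ.coe_toReal hx, ← hφ.coe_toReal hy] at hconv
  exact_mod_cast hconv

lemma exists_mul_sub_one_le : ∃ m : ℝ, ∀ z : ℝ, ((m * (z - 1) : ℝ) : EReal) ≤ φ z := by
  refine ⟨derivWithin (fun z => (φ z).toReal) (Set.Ioi 1) 1, fun z => ?_⟩
  rcases lt_or_ge z 0 with hz | hz
  · simp [hφ.eq_top_of_neg hz]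
  · have hsubgrad := add_rightDeriv_mul_sub_le hφ.convexOn_toReal (x := 1) (by simp) hz
    simp only [hφ.one, EReal.toReal_zero, zero_add] at hsubgrad
    rw [← hφ.coe_toReal hz]
    exact_mod_cast hsubgrad

lemma coe_le_psiE (y : ℝ) : (y : EReal) ≤ psiE φ y := by
  simpa [psiE, hφ.one] using le_iSup (fun z : ℝ => ((y * z : ℝ) : EReal) - φ z) 1

lemma psiE_ne_top_s5 (y : ℝ) : psiE φ y ≠ ⊤ := by
  obtain ⟨m, hm⟩ := hφ.exists_mul_sub_one_le
  obtain ⟨N, hN⟩ := hφ.superlinear y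
  suffices h : psiE φ y ≤ ((|y - m| * |N| + |m| : ℝ) : EReal) from
    ne_top_of_le_ne_top (EReal.coe_ne_top _) h
  refine psiE_le_coe_iff.2 fun z => ?_
  rcases lt_or_ge z 0 with hz | hz
  · simp [hφ.eq_top_of_neg hz]
  rcases le_total N z with hNz | hzN
  · refine le_trans (EReal.coe_le_coe_iff.2 ?_) (hN z hNz)
    exact sub_le_self _ (by positivity)
  · refine le_trans (EReal.coe_le_coe_iff.2 ?_) (hm z)
    have hgap : (y - m) * z ≤ |y - m| * |N| :=
      mul_le_mul (le_abs_self _) (hzN.trans (le_abs_self N)) hz (abs_nonneg _)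
    linarith [le_abs_self m]

lemma coe_psiR (y : ℝ) : (psiR φ y : EReal) = psiE φ y :=
  EReal.coe_toReal (hφ.psiE_ne_top_s5 y) (ne_bot_of_le_ne_bot (EReal.coe_ne_bot y) (hφ.coe_le_psiE y))

lemma psiR_le_iff {y c : ℝ} :
    psiR φ y ≤ c ↔ ∀ z : ℝ, 0 ≤ z → y * z - c ≤ (φ z).toReal := by
  rw [← EReal.coe_le_coe_iff, hφ.coe_psiR, psiE_le_coe_iff]
  refine forall_congr' fun z => ?_
  rcases lt_or_ge z 0 with hz | hz
  · simp [hφ.eq_top_of_neg hz, hz.not_ge]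
  · rw [← hφ.coe_toReal hz, EReal.coe_le_coe_iff, EReal.toReal_coe, forall_prop_of_true hz]

lemma mul_sub_psiR_le (y : ℝ) {z : ℝ} (hz : 0 ≤ z) : y * z - psiR φ y ≤ (φ z).toReal :=
  hφ.psiR_le_iff.1 le_rfl z hz

lemma le_psiR (y : ℝ) : y ≤ psiR φ y := by
  simpa [hφ.one] using hφ.mul_sub_psiR_le y zero_le_one

lemma neg_toReal_zero_le_psiR (y : ℝ) : -(φ 0).toReal ≤ psiR φ y := by
  simpa [neg_le] using hφ.mul_sub_psiR_le y le_rfl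

lemma monotone_psiR : Monotone (psiR φ) := fun _ b hab =>
  hφ.psiR_le_iff.2 fun _ hz =>
    (sub_le_sub_right (mul_le_mul_of_nonneg_right hab hz) _).trans (hφ.mul_sub_psiR_le b hz)

lemma exists_psiR_eq_self : ∃ y, psiR φ y = y := by
  obtain ⟨m, hm⟩ := hφ.exists_mul_sub_one_le
  refine ⟨m, le_antisymm (EReal.coe_le_coe_iff.1 ?_) (hφ.le_psiR m)⟩
  rw [hφ.coe_psiR]
  exact psiE_le_coe_iff.2 fun z => by simpa only [mul_sub_one] using hm z

variable {P : Measure Ω} {X : Ω → ℝ} {β c t : ℝ}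

lemma integrable_psiR_comp [IsFiniteMeasure P] (hX : AEMeasurable X P) (hc : ∀ᵐ ω ∂P, X ω ≤ c) :
    Integrable (fun ω => psiR φ (X ω)) P := by
  refine .of_mem_Icc (-(φ 0).toReal) (psiR φ c)
    (hφ.monotone_psiR.measurable.comp_aemeasurable hX) ?_
  filter_upwards [hc] with ω hω
  exact ⟨hφ.neg_toReal_zero_le_psiR _, hφ.monotone_psiR hω⟩

variable [IsProbabilityMeasure P]

lemma integral_le_rhoDiv (hβ : 0 ≤ β) (hX : Integrable X P) :
    ((∫ ω, X ω ∂P : ℝ) : EReal) ≤ rhoDiv φ β P X := by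
  refine le_iInf fun μ => le_iInf₂ fun t ht => ?_
  unfold rhoObj
  split_ifs with hψ
  · have hshift : ∫ ω, (X ω / t - μ) ∂P = (∫ ω, X ω ∂P) / t - μ := by
      simp [integral_sub (hX.div_const t) (integrable_const μ), integral_div]
    have hmono : ∫ ω, (X ω / t - μ) ∂P ≤ ∫ ω, psiR φ (X ω / t - μ) ∂P :=
      integral_mono ((hX.div_const t).sub (integrable_const μ)) hψ fun ω => hφ.le_psiR _
    rw [EReal.coe_le_coe_iff, ← div_le_iff₀' ht]
    linarith
  · exact le_top

lemma rhoObj_le_of_ae_le {y : ℝ} (hy : psiR φ y = y) (hX : AEMeasurable X P)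
    (hc : ∀ᵐ ω ∂P, X ω ≤ c) (ht : 0 < t) :
    rhoObj φ β P X (c / t - y) t ≤ ((c + t * β : ℝ) : EReal) := by
  have harg : ∀ᵐ ω ∂P, X ω / t - (c / t - y) ≤ y := by
    filter_upwards [hc] with ω hω
    linarith [div_le_div_of_nonneg_right hω ht.le]
  have hψ : Integrable (fun ω => psiR φ (X ω / t - (c / t - y))) P :=
    hφ.integrable_psiR_comp ((hX.div_const t).sub_const _) harg
  have hmean : ∫ ω, psiR φ (X ω / t - (c / t - y)) ∂P ≤ y := by
    refine (integral_mono_ae hψ (integrable_const y) ?_).trans_eq (by simp)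
    filter_upwards [harg] with ω hω
    exact (hφ.monotone_psiR hω).trans_eq hy
  rw [rhoObj, if_pos hψ, EReal.coe_le_coe_iff]
  calc t * (β + (c / t - y) + ∫ ω, psiR φ (X ω / t - (c / t - y)) ∂P)
      ≤ t * (β + c / t) := mul_le_mul_of_nonneg_left (by linarith) ht.le
    _ = c + t * β := by field_simp; ring

lemma rhoDiv_le_of_ae_le (hX : AEMeasurable X P) (hc : ∀ᵐ ω ∂P, X ω ≤ c) :
    rhoDiv φ β P X ≤ c := by
  obtain ⟨y, hy⟩ := hφ.exists_psiR_eq_self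
  have hbound : ∀ t : ℝ, 0 < t → rhoDiv φ β P X ≤ ((c + t * β : ℝ) : EReal) := fun t ht =>
    iInf_le_of_le (c / t - y) (iInf₂_le_of_le t ht (hφ.rhoObj_le_of_ae_le hy hX hc ht))
  have hcont : Continuous fun t : ℝ => ((c + t * β : ℝ) : EReal) :=
    continuous_coe_real_ereal.comp (by fun_prop)
  simpa using ge_of_tendsto ((hcont.tendsto 0).mono_left nhdsWithin_le_nhds)
    (eventually_nhdsWithin_of_forall (s := Set.Ioi 0) hbound)

lemma rhoDiv_le_essSup (hX : AEMeasurable X P) :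
    rhoDiv φ β P X ≤ essSup (fun ω => (X ω : EReal)) P := by
  refine EReal.le_of_forall_lt_iff_le.1 fun c hc => hφ.rhoDiv_le_of_ae_le hX ?_
  filter_upwards [ae_lt_of_essSup_lt hc] with ω hω
  exact (EReal.coe_lt_coe_iff.1 hω).le

lemma rhoDiv_const (hβ : 0 ≤ β) (c : ℝ) : rhoDiv φ β P (fun _ => c) = c :=
  le_antisymm (hφ.rhoDiv_le_of_ae_le aemeasurable_const (ae_of_all P fun _ => le_rfl))
    (by simpa using hφ.integral_le_rhoDiv (P := P) hβ (integrable_const c))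

end IsDivergenceFunction

/-- Bounds: `E X ≤ ρ_{φ,β}(X) ≤ esssup X`, and `ρ_{φ,β}(0) = 0`. -/
theorem rhoDiv_bounds (P : Measure Ω) [IsProbabilityMeasure P]
    (φ : ℝ → EReal) (hφ : IsDivergenceFunction φ) (β : ℝ) (hβ : 0 < β)
    (X : Ω → ℝ) (hX : Integrable X P) :
    ((∫ ω, X ω ∂P : ℝ) : EReal) ≤ rhoDiv φ β P X ∧
    rhoDiv φ β P X ≤ essSup (fun ω => ((X ω : ℝ) : EReal)) P ∧
    rhoDiv φ β P (fun _ => (0 : ℝ)) = 0 := by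
  exact ⟨hφ.integral_le_rhoDiv hβ.le hX, hφ.rhoDiv_le_essSup hX.aemeasurable,
    hφ.rhoDiv_const hβ.le 0⟩
end
end

section
/- Let φ be a divergence function and define Φ(x) := 0 for x ∈ [0,1] and Φ(x) := max{0, φ(x)} for x > 1 (with Φ(x) := ∞ for x < 0). Then Φ restricted to [0,∞) is a Young function, i.e., Φ is convex and non-decreasing on [0,∞), Φ(0) = 0, lim_{x→0} Φ(x)/x = 0 and lim_{x→∞} Φ(x)/x = ∞; moreover Φ is itself a divergence function, and d := sup_{x ≥ 0} |φ(x) − Φ(x)| is finite. -/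
/-!
Write `Ψ = max 0 φ`. A convex function is non-decreasing to the right of a minimiser, and `Ψ` is
minimal at `1`, so `Φ x = Ψ (max x 1)` on `[0, ∞)` is the composition of a convex non-decreasing
function with a convex one. Taking the supremum with the function that is `∞` on `(-∞, 0)` and `0`
elsewhere gives `Φ` on all of `ℝ`, whence lower semicontinuity. By superlinear growth `Φ = φ`
beyond some `N`, and `|φ - Φ| ≤ |φ|` is bounded on `[0, N]` by convexity.
-/

open MeasureTheory
open scoped ENNReal

noncomputable section

open Classical in
/-- The Young function associated with a divergence function `φ`:
`Φ(x) = 0` on `[0,1]`, `Φ(x) = max{0, φ(x)}` for `x > 1`, `Φ(x) = ∞` for `x < 0`. -/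
def YoungOf (φ : ℝ → EReal) : ℝ → EReal := fun x =>
  if x < 0 then ⊤ else if x ≤ 1 then 0 else max 0 (φ x)

open Set

section ConvexOn

variable {𝕜 : Type*} [Field 𝕜] [LinearOrder 𝕜] [IsStrictOrderedRing 𝕜]

lemma monotoneOn_inter_Ici_of_isMinOn {β : Type*} [AddCommGroup β] [LinearOrder β]
    [IsOrderedAddMonoid β] [Module 𝕜 β] [IsStrictOrderedModule 𝕜 β] {s : Set 𝕜} {g : 𝕜 → β} {a : 𝕜}
    (hg : ConvexOn 𝕜 s g) (ha : a ∈ s) (hmin : IsMinOn g s a) : MonotoneOn g (s ∩ Ici a) := by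
  rintro x ⟨-, hax⟩ y ⟨hy, -⟩ hxy
  calc g x ≤ max (g a) (g y) := hg.le_max_of_mem_Icc ha hy ⟨hax, hxy⟩
    _ = g y := max_eq_right (hmin hy)

lemma convexOn_comp_max {β : Type*} [AddCommMonoid β] [PartialOrder β] [Module 𝕜 β]
    {g : 𝕜 → β} {a : 𝕜} (hg : ConvexOn 𝕜 (Ici a) g) (hmono : MonotoneOn g (Ici a)) :
    ConvexOn 𝕜 univ fun x => g (max x a) := by
  have hmax : ConvexOn 𝕜 univ fun x : 𝕜 => max x a :=
    (convexOn_id convex_univ).sup (convexOn_const a convex_univ)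
  have himage : (fun x => max x a) '' univ = Ici a := by
    ext x
    simpa using ⟨fun ⟨y, hy⟩ => hy ▸ le_max_right y a, fun hx => ⟨x, max_eq_left hx⟩⟩
  exact ConvexOn.comp (himage ▸ hg) hmax (himage ▸ hmono)

lemma exists_forall_abs_le_of_convexOn_Icc {f : 𝕜 → 𝕜} {a b : 𝕜} (hf : ConvexOn 𝕜 (Icc a b) f) :
    ∃ C, ∀ x ∈ Icc a b, |f x| ≤ C := by
  set M := max (f a) (f b)
  set m := f ((a + b) / 2)
  have hupper : ∀ x ∈ Icc a b, f x ≤ M := fun x hx =>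
    have hab : a ≤ b := hx.1.trans hx.2
    hf.le_max_of_mem_Icc (left_mem_Icc.2 hab) (right_mem_Icc.2 hab) hx
  -- The midpoint of `x` and its reflection `a + b - x` does not depend on `x`.
  have hlower : ∀ x ∈ Icc a b, 2 * m - M ≤ f x := fun x hx => by
    have hx' : a + b - x ∈ Icc a b := ⟨by linarith [hx.2], by linarith [hx.1]⟩
    have hmid : m ≤ (f x + f (a + b - x)) / 2 :=
      calc m = f ((1 / 2 : 𝕜) • x + (1 / 2 : 𝕜) • (a + b - x)) := by
            simp only [m, smul_eq_mul]; congr 1; ring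
        _ ≤ (1 / 2 : 𝕜) • f x + (1 / 2 : 𝕜) • f (a + b - x) :=
            hf.right hx hx' one_half_pos.le one_half_pos.le (add_halves 1)
        _ = (f x + f (a + b - x)) / 2 := by simp only [smul_eq_mul]; ring
    linarith [hupper _ hx']
  exact ⟨max |2 * m - M| |M|, fun x hx => abs_le_max_abs_abs (hlower x hx) (hupper x hx)⟩

end ConvexOn

lemma ereal_convex_iff_convexOn_toReal {E : Type*} [AddCommGroup E] [Module ℝ E] {φ : E → EReal}
    (hbot : ∀ x, φ x ≠ ⊥) :
    (∀ x y : E, ∀ a b : ℝ, 0 < a → 0 < b → a + b = 1 →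
      φ (a • x + b • y) ≤ (a : EReal) * φ x + (b : EReal) * φ y) ↔
    ConvexOn ℝ {x | φ x ≠ ⊤} fun x => (φ x).toReal := by
  have hcoe : ∀ x ∈ {x | φ x ≠ ⊤}, φ x = ((φ x).toReal : EReal) := fun x hx =>
    (EReal.coe_toReal hx (hbot x)).symm
  rw [convexOn_iff_forall_pos, convex_iff_forall_pos]
  constructor
  · intro h
    have hdom : ∀ x ∈ {x | φ x ≠ ⊤}, ∀ y ∈ {x | φ x ≠ ⊤}, ∀ a b : ℝ, 0 < a → 0 < b → a + b = 1 →
        a • x + b • y ∈ {x | φ x ≠ ⊤} := fun x hx y hy a b ha hb hab => by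
      refine ne_top_of_le_ne_top ?_ (h x y a b ha hb hab)
      rw [hcoe x hx, hcoe y hy]
      exact_mod_cast EReal.coe_ne_top _
    refine ⟨fun x hx y hy a b => hdom x hx y hy a b, fun x hx y hy a b ha hb hab => ?_⟩
    have hle := h x y a b ha hb hab
    rw [hcoe x hx, hcoe y hy, hcoe _ (hdom x hx y hy a b ha hb hab)] at hle
    exact_mod_cast hle
  · rintro ⟨hdom, h⟩ x y a b ha hb hab
    have hmul_ne_bot : ∀ (c : ℝ) (z : E), 0 < c → (c : EReal) * φ z ≠ ⊥ := fun c z hc => by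
      simp [EReal.mul_ne_bot, hbot, hc.le]
    by_cases hx : φ x = ⊤
    · rw [hx, EReal.coe_mul_top_of_pos ha, EReal.top_add_of_ne_bot (hmul_ne_bot b y hb)]
      exact le_top
    by_cases hy : φ y = ⊤
    · rw [hy, EReal.coe_mul_top_of_pos hb, EReal.add_top_of_ne_bot (hmul_ne_bot a x ha)]
      exact le_top
    rw [hcoe x hx, hcoe y hy, hcoe _ (hdom hx hy ha hb hab)]
    exact_mod_cast h hx hy ha hb hab

section YoungOf

variable {φ : ℝ → EReal} {x : ℝ}

lemma youngOf_of_neg (hx : x < 0) : YoungOf φ x = ⊤ := by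
  simp [YoungOf, hx]

lemma youngOf_of_mem_Icc (hx : x ∈ Icc 0 1) : YoungOf φ x = 0 := by
  simp [YoungOf, hx.1.not_gt, hx.2]

lemma youngOf_of_one_lt (hx : 1 < x) : YoungOf φ x = max 0 (φ x) := by
  simp [YoungOf, (zero_lt_one.trans hx).not_gt, hx.not_ge]

lemma youngOf_of_nonneg (h1 : φ 1 = 0) (hx : 0 ≤ x) : YoungOf φ x = max 0 (φ (max x 1)) := by
  rcases le_or_gt x 1 with hx1 | hx1
  · rw [youngOf_of_mem_Icc ⟨hx, hx1⟩, max_eq_right hx1, h1, max_self]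
  · rw [youngOf_of_one_lt hx1, max_eq_left hx1.le]

lemma youngOf_nonneg (φ : ℝ → EReal) (x : ℝ) : 0 ≤ YoungOf φ x := by
  unfold YoungOf
  split_ifs <;> simp

lemma youngOf_ne_bot (φ : ℝ → EReal) (x : ℝ) : YoungOf φ x ≠ ⊥ :=
  (EReal.bot_lt_zero.trans_le (youngOf_nonneg φ x)).ne'

lemma youngOf_ne_top_iff_of_ne_top (hfin : ∀ x, 1 < x → φ x ≠ ⊤) : YoungOf φ x ≠ ⊤ ↔ 0 ≤ x := by
  refine ⟨fun h => not_lt.1 (mt youngOf_of_neg h), fun hx => ?_⟩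
  rcases le_or_gt x 1 with hx1 | hx1
  · simp [youngOf_of_mem_Icc ⟨hx, hx1⟩]
  · rw [youngOf_of_one_lt hx1]
    exact (max_lt EReal.zero_lt_top (hfin x hx1).lt_top).ne

lemma youngOf_eq_max_indicator (h1 : φ 1 = 0) :
    YoungOf φ = fun x => max ((Iio 0).indicator (fun _ => ⊤) x) (max 0 (φ (max x 1))) := by
  ext x
  rcases lt_or_ge x 0 with hx | hx
  · simp [youngOf_of_neg hx, hx]
  · simp [youngOf_of_nonneg h1 hx, hx.not_gt]

lemma lowerSemicontinuous_youngOf (hφ : LowerSemicontinuous φ) (h1 : φ 1 = 0) :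
    LowerSemicontinuous (YoungOf φ) := by
  rw [youngOf_eq_max_indicator h1]
  exact (isOpen_Iio.lowerSemicontinuous_indicator le_top).sup
    (lowerSemicontinuous_const.sup (hφ.comp (continuous_id.max continuous_const)))

lemma tendsto_toReal_youngOf_div (φ : ℝ → EReal) :
    Filter.Tendsto (fun x : ℝ => (YoungOf φ x).toReal / x) (nhdsWithin 0 (Ioi 0)) (nhds 0) := by
  refine tendsto_const_nhds.congr' ?_
  filter_upwards [Ioo_mem_nhdsGT zero_lt_one] with x hx
  simp [youngOf_of_mem_Icc (Ioo_subset_Icc_self hx)]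

lemma abs_toReal_sub_youngOf_le (φ : ℝ → EReal) (hx : 0 ≤ x) :
    |(φ x).toReal - (YoungOf φ x).toReal| ≤ |(φ x).toReal| := by
  rcases le_or_gt x 1 with hx1 | hx1
  · simp [youngOf_of_mem_Icc ⟨hx, hx1⟩]
  · rcases le_total 0 (φ x) with hpos | hneg
    · simp [youngOf_of_one_lt hx1, hpos]
    · simp [youngOf_of_one_lt hx1, hneg]

end YoungOf

namespace IsDivergenceFunction

variable {φ : ℝ → EReal}

lemma setOf_ne_top (hφ : IsDivergenceFunction φ) : {x | φ x ≠ ⊤} = Ici 0 :=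
  ext hφ.domain

lemma convexOn_toReal_s8 (hφ : IsDivergenceFunction φ) :
    ConvexOn ℝ (Ici 0) fun x => (φ x).toReal :=
  hφ.setOf_ne_top ▸ (ereal_convex_iff_convexOn_toReal hφ.ne_bot).1 hφ.convex

lemma toReal_youngOf (hφ : IsDivergenceFunction φ) {x : ℝ} (hx : 0 ≤ x) :
    (YoungOf φ x).toReal = max 0 (φ (max x 1)).toReal := by
  have hcoe : φ (max x 1) = ((φ (max x 1)).toReal : EReal) :=
    (EReal.coe_toReal ((hφ.domain _).2 (le_max_of_le_left hx)) (hφ.ne_bot _)).symm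
  rw [youngOf_of_nonneg hφ.one hx, hcoe, ← EReal.coe_zero,
    ← EReal.coe_strictMono.monotone.map_max, EReal.toReal_coe, EReal.toReal_coe]

lemma convexOn_toReal_youngOf (hφ : IsDivergenceFunction φ) :
    ConvexOn ℝ (Ici 0) fun x => (YoungOf φ x).toReal := by
  set g : ℝ → ℝ := fun x => max 0 (φ x).toReal with hg
  have hconv : ConvexOn ℝ (Ici 0) g :=
    (convexOn_const 0 (convex_Ici 0)).sup hφ.convexOn_toReal_s8
  have hmin : IsMinOn g (Ici 0) 1 := fun x _ => by simp [hg, hφ.one]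
  have hsub : Ici (1 : ℝ) ⊆ Ici 0 := Ici_subset_Ici.2 zero_le_one
  have hmono : MonotoneOn g (Ici 1) :=
    (monotoneOn_inter_Ici_of_isMinOn hconv (hsub self_mem_Ici) hmin).mono
      (subset_inter hsub subset_rfl)
  have hcomp : ConvexOn ℝ univ fun x => g (max x 1) :=
    convexOn_comp_max (hconv.subset hsub (convex_Ici 1)) hmono
  exact (hcomp.subset (subset_univ _) (convex_Ici 0)).congr fun x hx => (hφ.toReal_youngOf hx).symm

lemma youngOf_ne_top_iff (hφ : IsDivergenceFunction φ) (x : ℝ) : YoungOf φ x ≠ ⊤ ↔ 0 ≤ x :=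
  youngOf_ne_top_iff_of_ne_top fun y hy => (hφ.domain y).2 (zero_le_one.trans hy.le)

lemma monotoneOn_youngOf (hφ : IsDivergenceFunction φ) : MonotoneOn (YoungOf φ) (Ici 0) := by
  have hmin : IsMinOn (fun x => (YoungOf φ x).toReal) (Ici 0) 0 := fun x _ => by
    simpa [youngOf_of_mem_Icc] using EReal.toReal_nonneg (youngOf_nonneg φ x)
  have hmono := monotoneOn_inter_Ici_of_isMinOn hφ.convexOn_toReal_youngOf self_mem_Ici hmin
  rw [inter_self] at hmono
  intro x hx y hy hxy
  rw [← EReal.coe_toReal ((hφ.youngOf_ne_top_iff x).2 hx) (youngOf_ne_bot φ x),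
    ← EReal.coe_toReal ((hφ.youngOf_ne_top_iff y).2 hy) (youngOf_ne_bot φ y)]
  exact EReal.coe_le_coe_iff.2 (hmono hx hy hxy)

lemma youngOf (hφ : IsDivergenceFunction φ) : IsDivergenceFunction (YoungOf φ) where
  convex := (ereal_convex_iff_convexOn_toReal (youngOf_ne_bot φ)).2 <| by
    rw [show {x | YoungOf φ x ≠ ⊤} = Ici 0 from ext hφ.youngOf_ne_top_iff]
    exact hφ.convexOn_toReal_youngOf
  lsc := lowerSemicontinuous_youngOf hφ.lsc hφ.one
  ne_bot := youngOf_ne_bot φ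
  one := youngOf_of_mem_Icc (right_mem_Icc.2 zero_le_one)
  domain := hφ.youngOf_ne_top_iff
  superlinear M := by
    obtain ⟨N, hN⟩ := hφ.superlinear M
    refine ⟨max N 2, fun x hx => ?_⟩
    rw [youngOf_of_one_lt (one_lt_two.trans_le (le_of_max_le_right hx))]
    exact le_max_of_le_right (hN x (le_of_max_le_left hx))

lemma exists_forall_ge_youngOf_eq (hφ : IsDivergenceFunction φ) :
    ∃ N, ∀ x, N ≤ x → YoungOf φ x = φ x := by
  obtain ⟨N, hN⟩ := hφ.superlinear 0
  refine ⟨max N 2, fun x hx => ?_⟩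
  have hpos : 0 ≤ φ x := by simpa using hN x (le_of_max_le_left hx)
  rw [youngOf_of_one_lt (one_lt_two.trans_le (le_of_max_le_right hx)), max_eq_right hpos]

lemma exists_abs_toReal_sub_youngOf_le (hφ : IsDivergenceFunction φ) :
    ∃ d : ℝ, ∀ x : ℝ, 0 ≤ x → |(φ x).toReal - (YoungOf φ x).toReal| ≤ d := by
  obtain ⟨N, hN⟩ := hφ.exists_forall_ge_youngOf_eq
  obtain ⟨C, hC⟩ := exists_forall_abs_le_of_convexOn_Icc
    (hφ.convexOn_toReal_s8.subset (Icc_subset_Ici_self : Icc 0 N ⊆ Ici 0) (convex_Icc 0 N))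
  refine ⟨max C 0, fun x hx => ?_⟩
  rcases le_total N x with hNx | hxN
  · simp [hN x hNx]
  · exact le_max_of_le_left ((abs_toReal_sub_youngOf_le φ hx).trans (hC x ⟨hx, hxN⟩))

end IsDivergenceFunction

/-- Lemma: `Φ` is a Young function (convex, non-decreasing on `[0,∞)`, `Φ(0) = 0`,
`Φ(x)/x → 0` as `x → 0` and `Φ(x)/x → ∞` as `x → ∞`), it is a divergence function,
and `d = sup_{x ≥ 0} |φ(x) − Φ(x)|` is finite. -/
theorem youngOf_isYoung (φ : ℝ → EReal) (hφ : IsDivergenceFunction φ) :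
    YoungOf φ 0 = 0 ∧
    (∀ x y : ℝ, 0 ≤ x → x ≤ y → YoungOf φ x ≤ YoungOf φ y) ∧
    (∀ x y a b : ℝ, 0 ≤ x → 0 ≤ y → 0 < a → 0 < b → a + b = 1 →
      YoungOf φ (a * x + b * y) ≤ (a : EReal) * YoungOf φ x + (b : EReal) * YoungOf φ y) ∧
    Filter.Tendsto (fun x : ℝ => (YoungOf φ x).toReal / x) (nhdsWithin 0 (Set.Ioi 0))
      (nhds 0) ∧
    (∀ M : ℝ, ∃ N : ℝ, ∀ x : ℝ, N ≤ x → ((M * x : ℝ) : EReal) ≤ YoungOf φ x) ∧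
    IsDivergenceFunction (YoungOf φ) ∧
    (∃ d : ℝ, ∀ x : ℝ, 0 ≤ x → |(φ x).toReal - (YoungOf φ x).toReal| ≤ d) := by
  exact ⟨youngOf_of_mem_Icc (left_mem_Icc.2 zero_le_one),
    fun _ _ hx hxy => hφ.monotoneOn_youngOf hx (hx.trans hxy) hxy,
    fun x y a b _ _ => hφ.youngOf.convex x y a b,
    tendsto_toReal_youngOf_div φ,
    hφ.youngOf.superlinear,
    hφ.youngOf,
    hφ.exists_abs_toReal_sub_youngOf_le⟩
end
end
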